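/- arXiv:2009.01025 — 2 statements merged into one kernel-verified Lean document; each statement's English description precedes it below -/
import Mathlib

section
/- Suppose a, b ∈ F satisfy a^{q+1} ≠ b^{q+1}, and set a′ = a^q/(a^{q+1} − b^{q+1}) and b′ = −b/(a^{q+1} − b^{q+1}). Then f_{a′,b′} is a two-sided compositional inverse of f_{a,b}, i.e., f_{a′,b′}(f_{a,b}(x)) = x and f_{a,b}(f_{a′,b′}(x)) = x for all x ∈ F. -/
/-!
The map `x ↦ x ^ q` is an involutive endomorphism `σ` of `F`. For any involutive `σ`, the maps
`x ↦ a * x + b * σ x` compose like the matrices `!![a, b; σ b, σ a]`, so such a map is inverted by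
the adjugate `!![σ a, -b; -σ b, a]` divided by the determinant `a * σ a - b * σ b`, which `σ` fixes.
-/

/-- The map `f_{a,b}` for an arbitrary ring endomorphism `σ` in place of `x ↦ x ^ q`. It is a bare
function, since only its values and composites matter here. -/
def twistedMul {R : Type*} [Semiring R] (σ : R →+* R) (a b x : R) : R :=
  a * x + b * σ x

section Semiring

variable {R : Type*} [Semiring R] {σ : R →+* R}

theorem twistedMul_one_zero (x : R) : twistedMul σ 1 0 x = x := by
  simp [twistedMul]

theorem twistedMul_twistedMul (hσ : Function.Involutive σ) (a b c d x : R) :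
    twistedMul σ a b (twistedMul σ c d x) =
      twistedMul σ (a * c + b * σ d) (a * d + b * σ c) x := by
  simp only [twistedMul, map_add, map_mul, hσ x, mul_add, add_mul, mul_assoc]
  abel

theorem leftInverse_twistedMul (hσ : Function.Involutive σ) {a b c d : R}
    (h_one : a * c + b * σ d = 1) (h_zero : a * d + b * σ c = 0) :
    Function.LeftInverse (twistedMul σ a b) (twistedMul σ c d) := fun x => by
  rw [twistedMul_twistedMul hσ, h_one, h_zero, twistedMul_one_zero]

end Semiring

theorem map_eq_self_of_mul_eq_one {M : Type*} [CommMonoid M] {Φ : Type*} [FunLike Φ M M]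
    [MonoidHomClass Φ M M] {φ : Φ} {d e : M} (hde : d * e = 1) (he : φ e = e) : φ d = d := by
  have hφde : φ d * e = 1 := by rw [← he, ← map_mul, hde, map_one]
  exact left_inv_eq_right_inv hφde (mul_comm d e ▸ hde)

section CommRing

variable {R : Type*} [CommRing R] {σ : R →+* R}

theorem map_mul_self_map_sub_mul_self_map (hσ : Function.Involutive σ) (a b : R) :
    σ (a * σ a - b * σ b) = a * σ a - b * σ b := by
  rw [map_sub, map_mul, map_mul, hσ a, hσ b, mul_comm a, mul_comm b]

theorem f_ab_inverse_general (hσ : Function.Involutive σ) {a b d : R}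
    (hd : d * (a * σ a - b * σ b) = 1) :
    Function.LeftInverse (twistedMul σ (σ a * d) (-b * d)) (twistedMul σ a b) ∧
      Function.RightInverse (twistedMul σ (σ a * d) (-b * d)) (twistedMul σ a b) := by
  have hσd : σ d = d := map_eq_self_of_mul_eq_one hd (map_mul_self_map_sub_mul_self_map hσ a b)
  constructor
  · apply leftInverse_twistedMul hσ
    · linear_combination hd
    · ring
  · apply leftInverse_twistedMul hσ
    · rw [map_mul, map_neg, hσd]
      linear_combination hd
    · rw [map_mul, hσd, hσ a]
      ring

end CommRing

theorem exists_involutive_ringHom_eq_pow {F : Type*} [Field F] [Fintype F] {q : ℕ}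
    (hF : Fintype.card F = q ^ 2) :
    ∃ σ : F →+* F, Function.Involutive σ ∧ ∀ x, σ x = x ^ q := by
  obtain ⟨p, _⟩ := CharP.exists F
  obtain ⟨n, hp, hn⟩ := FiniteField.card F p
  have : Fact p.Prime := ⟨hp⟩
  have hq : q ∣ p ^ (n : ℕ) := hn ▸ hF ▸ dvd_pow_self q two_ne_zero
  obtain ⟨k, -, rfl⟩ := (Nat.dvd_prime_pow hp).1 hq
  refine ⟨iterateFrobenius F p k, fun x => ?_, iterateFrobenius_def p k⟩
  rw [iterateFrobenius_def, iterateFrobenius_def, ← pow_mul, ← sq, ← hF, FiniteField.pow_card]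

/-- Let `q` be a prime power and `F` a finite field with `q^2` elements.
Suppose `a, b ∈ F` satisfy `a^(q+1) ≠ b^(q+1)`, and set
`a' = a^q / (a^(q+1) - b^(q+1))` and `b' = -b / (a^(q+1) - b^(q+1))`.
Then `f_{a',b'}` is a two-sided compositional inverse of `f_{a,b}`. -/
theorem f_ab_inverse (q : ℕ) (hq : IsPrimePow q) (F : Type*) [Field F] [Fintype F]
    (hF : Fintype.card F = q ^ 2) (a b : F) (hab : a ^ (q + 1) ≠ b ^ (q + 1))
    (a' b' : F) (ha' : a' = a ^ q / (a ^ (q + 1) - b ^ (q + 1)))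
    (hb' : b' = -b / (a ^ (q + 1) - b ^ (q + 1))) :
    ∀ x : F,
      a' * (a * x + b * x ^ q) + b' * (a * x + b * x ^ q) ^ q = x ∧
      a * (a' * x + b' * x ^ q) + b * (a' * x + b' * x ^ q) ^ q = x := by
  obtain ⟨σ, hσ, hσ_pow⟩ := exists_involutive_ringHom_eq_pow hF
  simp only [pow_succ', ← hσ_pow, div_eq_mul_inv] at hab ha' hb' ⊢
  subst ha' hb'
  exact forall_and.2 (f_ab_inverse_general hσ (inv_mul_cancel₀ (sub_ne_zero.2 hab)))
end

section
/- Let t, t′ ∈ F be nonzero. Then f_{t,0} and f_{t′,0} are conjugate in GL(V) if and only if t′ = t or t′ = t^q. -/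
/-!
Let `σ` be the involution `x ↦ x ^ q` of `F`. The polynomial `(X - t') * (X - σ t')` vanishes at
`t'` and its coefficients are fixed by `σ`, so a bijection that is linear over the fixed points and
turns multiplication by `t'` into multiplication by `t` forces it to vanish at `t` as well.
Conversely, `σ` itself conjugates multiplication by `t` into multiplication by `σ t`.
-/

section Involution

variable {R : Type*} [CommRing R] {σ : R →+* R}

lemma sub_mul_sub_smul_eq_zero_of_intertwines (hσ : Function.Involutive σ) {M : Type*}
    [AddCommGroup M] [Module R M] (h : R →+ M) (h_smul : ∀ c x, σ c = c → h (c * x) = c • h x)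
    {t t' : R} (h_intertwines : ∀ x, h (t' * x) = t • h x) (x : R) :
    ((t - t') * (t - σ t')) • h x = 0 := by
  have trace_fixed : σ (t' + σ t') = t' + σ t' := by rw [map_add, hσ, add_comm]
  have norm_fixed : σ (t' * σ t') = t' * σ t' := by rw [map_mul, hσ, mul_comm]
  have quadratic_relation : t • t • h x + (t' * σ t') • h x = (t' + σ t') • t • h x :=
    calc t • t • h x + (t' * σ t') • h x
      _ = h (t' * (t' * x)) + h (t' * σ t' * x) := by
        rw [h_intertwines, h_intertwines, h_smul _ _ norm_fixed]
      _ = h ((t' + σ t') * (t' * x)) := by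
        rw [← map_add]
        congr 1
        ring
      _ = (t' + σ t') • t • h x := by
        rw [h_smul _ _ trace_fixed, h_intertwines]
  linear_combination (norm := module) quadratic_relation

theorem f_t0_conjugate_iff_general [IsDomain R] (hσ : Function.Involutive σ) (t t' : R) :
    (∃ h : R → R, (∀ x y : R, h (x + y) = h x + h y) ∧
        (∀ c x : R, σ c = c → h (c * x) = c * h x) ∧
        Function.Bijective h ∧ ∀ x : R, h (t' * x) = t * h x) ↔
      t' = t ∨ t' = σ t := by
  constructor
  · rintro ⟨h, h_add, h_smul, h_bij, h_intertwines⟩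
    have h_one_ne_zero : h 1 ≠ 0 :=
      (map_ne_zero_iff (AddMonoidHom.mk' h h_add) h_bij.injective).2 one_ne_zero
    have root : (t - t') * (t - σ t') * h 1 = 0 :=
      sub_mul_sub_smul_eq_zero_of_intertwines hσ (AddMonoidHom.mk' h h_add) h_smul h_intertwines 1
    rcases mul_eq_zero.1 ((mul_eq_zero.1 root).resolve_right h_one_ne_zero) with h_eq | h_eq
    · exact .inl (sub_eq_zero.1 h_eq).symm
    · exact .inr (hσ.eq_iff.1 (sub_eq_zero.1 h_eq).symm)
  · rintro (rfl | rfl)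
    · exact ⟨id, fun _ _ ↦ rfl, fun _ _ _ ↦ rfl, Function.bijective_id, fun _ ↦ rfl⟩
    · exact ⟨σ, map_add σ, fun c x hc ↦ by rw [map_mul, hc], hσ.bijective,
        fun x ↦ by rw [map_mul, hσ]⟩

end Involution

section FiniteField

variable {F : Type*} [Field F] [Fintype F] {q n : ℕ}

lemma exists_eq_char_pow_of_card_eq_pow (p : ℕ) [CharP F p] (hn : n ≠ 0)
    (hF : Fintype.card F = q ^ n) : ∃ k, q = p ^ k := by
  obtain ⟨m, hp, hm⟩ := FiniteField.card F p
  have q_dvd : q ∣ p ^ (m : ℕ) := by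
    rw [← hm, hF]
    exact dvd_pow_self q hn
  obtain ⟨k, -, hk⟩ := (Nat.dvd_prime_pow hp).1 q_dvd
  exact ⟨k, hk⟩

lemma exists_ringHom_eq_pow_of_card_eq_pow (hn : n ≠ 0) (hF : Fintype.card F = q ^ n) :
    ∃ σ : F →+* F, ∀ x, σ x = x ^ q := by
  obtain ⟨p, _⟩ := CharP.exists F
  have : Fact p.Prime := ⟨CharP.char_is_prime F p⟩
  obtain ⟨k, rfl⟩ := exists_eq_char_pow_of_card_eq_pow p hn hF
  exact ⟨iterateFrobenius F p k, iterateFrobenius_def p k⟩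

lemma exists_involutive_ringHom_eq_pow_of_card_eq_sq (hF : Fintype.card F = q ^ 2) :
    ∃ σ : F →+* F, Function.Involutive σ ∧ ∀ x, σ x = x ^ q := by
  obtain ⟨σ, hσ⟩ := exists_ringHom_eq_pow_of_card_eq_pow two_ne_zero hF
  exact ⟨σ, fun x ↦ by rw [hσ, hσ, ← pow_mul, ← sq, ← hF, FiniteField.pow_card], hσ⟩

end FiniteField

/-- Let `q` be a prime power and `F` a finite field with `q^2` elements, regarded as a
2-dimensional vector space over the subfield `𝔽_q = {x : x^q = x}`.  Let `t, t' ∈ F` be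
nonzero.  Then `f_{t,0}` and `f_{t',0}` are conjugate in `GL(V)` if and only if
`t' = t` or `t' = t^q`. -/
theorem f_t0_conjugate_iff (q : ℕ) (hq : IsPrimePow q) (F : Type*) [Field F] [Fintype F]
    (hF : Fintype.card F = q ^ 2) (t t' : F) (ht : t ≠ 0) (ht' : t' ≠ 0) :
    (∃ h : F → F, (∀ x y : F, h (x + y) = h x + h y) ∧
        (∀ c x : F, c ^ q = c → h (c * x) = c * h x) ∧
        Function.Bijective h ∧ ∀ x : F, h (t' * x) = t * h x) ↔
      t' = t ∨ t' = t ^ q := by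
  obtain ⟨σ, σ_involutive, hσ⟩ := exists_involutive_ringHom_eq_pow_of_card_eq_sq hF
  simpa only [hσ] using f_t0_conjugate_iff_general σ_involutive t t'
end
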